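/- arXiv:2309.07644 — 2 statements merged into one kernel-verified Lean document; each statement's English description precedes it below -/
import Mathlib

section
/- Let X be a regular locally compact topological space, and let μ₁ and μ₂ be Radon measures (in the generalized sense) on X such that ∫_X f dμ₁ = ∫_X f dμ₂ for every continuous compactly supported function f : X → ℝ. Then μ₁ and μ₂ agree on all Borel sets. -/
/-!
A Radon measure is determined by its values on open sets (outer regularity), and these by its
values on closed compact sets (inner regularity). The two measures are compared through a Urysohn
function `f` with `1_K ≤ f ≤ 1_U`, for `K` closed compact inside `U` open: this gives
`μ K ≤ ∫ f ∂μ = ∫ f ∂ν ≤ ν U`, so that `μ U ≤ ν U` on taking the supremum over `K`. Exchanging the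
roles of the measures yields equality on open sets.
Urysohn's lemma for a compact and a disjoint closed set only needs a regular locally compact
space, and the topological support of `f`, being closed and compact, has finite measure.
-/

open MeasureTheory Set

/-- A generalized Radon measure (possibly non-Hausdorff setting): finite on closed compact
sets, outer regular on all Borel sets, inner regular on open sets w.r.t. closed compacts. -/
def IsRadonG {X : Type*} [TopologicalSpace X] [MeasurableSpace X] (μ : Measure X) : Prop :=
  (∀ K : Set X, IsClosed K → IsCompact K → μ K < ⊤) ∧
  (∀ E : Set X, MeasurableSet E → μ E = ⨅ (U : Set X) (_ : IsOpen U) (_ : E ⊆ U), μ U) ∧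
  (∀ U : Set X, IsOpen U →
    μ U = ⨆ (K : Set X) (_ : K ⊆ U) (_ : IsClosed K) (_ : IsCompact K), μ K)

/-- A continuous compactly supported function with values in `[0, 1]` is integrable for a
generalized Radon measure. Mathlib's
`Continuous.integrable_of_hasCompactSupport` assumes finiteness on all compact sets, closed or
not, whereas only the closed set `tsupport f` matters here. -/
lemma IsRadonG.integrable {X : Type*} [TopologicalSpace X] [MeasurableSpace X] [BorelSpace X]
    {μ : Measure X} (hμ : IsRadonG μ) {f : X → ℝ} (hf : Continuous f)
    (hc : HasCompactSupport f) (hb : ∀ x, f x ∈ Icc (0 : ℝ) 1) : Integrable f μ := by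
  have hfin : μ (tsupport f) < ⊤ := hμ.1 _ (isClosed_tsupport f) hc
  have hg : Integrable ((tsupport f).indicator fun _ ↦ (1 : ℝ)) μ :=
    (integrable_indicator_iff (isClosed_tsupport f).measurableSet).2
      (integrableOn_const hfin.ne)
  refine hg.mono' hf.measurable.aestronglyMeasurable (.of_forall fun x ↦ ?_)
  rw [Real.norm_of_nonneg (hb x).1]
  by_cases hx : x ∈ tsupport f
  · simpa [hx] using (hb x).2
  · simp [hx, image_eq_zero_of_notMem_tsupport hx]

/-- The Urysohn comparison, for one direction. -/
lemma IsRadonG.measure_open_le {X : Type*} [TopologicalSpace X]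
    [RegularSpace X] [WeaklyLocallyCompactSpace X] [MeasurableSpace X] [BorelSpace X]
    {μ ν : Measure X} (hμ : IsRadonG μ) (hν : IsRadonG ν)
    (h : ∀ f : X → ℝ, Continuous f → HasCompactSupport f →
      ∫ x, f x ∂μ = ∫ x, f x ∂ν) {U : Set X} (hU : IsOpen U) : μ U ≤ ν U := by
  rw [hμ.2.2 U hU]
  refine iSup_le fun K ↦ iSup_le fun hKU ↦ iSup_le fun hKcl ↦ iSup_le fun hK ↦ ?_
  obtain ⟨f, hf1, hf0, hfc, hb⟩ := exists_continuous_one_zero_of_isCompact hK hU.isClosed_compl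
    (disjoint_compl_right_iff_subset.2 hKU)
  have hnn : ∀ x, 0 ≤ f x := fun x ↦ (hb x).1
  calc μ K = ∫⁻ x, K.indicator 1 x ∂μ := (lintegral_indicator_one hKcl.measurableSet).symm
    _ ≤ ∫⁻ x, ENNReal.ofReal (f x) ∂μ := by
        refine lintegral_mono fun x ↦ ?_
        by_cases hx : x ∈ K
        · simp [hx, hf1 hx]
        · simp [hx]
    _ = ∫⁻ x, ENNReal.ofReal (f x) ∂ν := by
        rw [← ofReal_integral_eq_lintegral_ofReal (hμ.integrable f.continuous hfc hb)
            (.of_forall hnn), h f f.continuous hfc,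
          ofReal_integral_eq_lintegral_ofReal (hν.integrable f.continuous hfc hb)
            (.of_forall hnn)]
    _ ≤ ∫⁻ x, U.indicator 1 x ∂ν := by
        refine lintegral_mono fun x ↦ ?_
        by_cases hx : x ∈ U
        · simpa [hx] using (hb x).2
        · simp [hx, hf0 (show x ∈ Uᶜ from hx)]
    _ = ν U := lintegral_indicator_one hU.measurableSet

/-- Uniqueness part of the Riesz representation theorem for regular locally compact
spaces: two generalized Radon measures giving the same integral to every continuous
compactly supported function agree on all Borel sets. -/
theorem radonG_unique_of_integral_eq {X : Type*} [TopologicalSpace X]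
    [RegularSpace X] [WeaklyLocallyCompactSpace X] [MeasurableSpace X] [BorelSpace X]
    (μ₁ μ₂ : Measure X) (h₁ : IsRadonG μ₁) (h₂ : IsRadonG μ₂)
    (h : ∀ f : X → ℝ, Continuous f → HasCompactSupport f →
      ∫ x, f x ∂μ₁ = ∫ x, f x ∂μ₂) :
    ∀ E : Set X, MeasurableSet E → μ₁ E = μ₂ E := by
  intro E hE
  have hopen : ∀ U : Set X, IsOpen U → μ₁ U = μ₂ U := fun U hU ↦
    le_antisymm (h₁.measure_open_le h₂ h hU)
      (h₂.measure_open_le h₁ (fun f hf hc ↦ (h f hf hc).symm) hU)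
  rw [h₁.2.1 E hE, h₂.2.1 E hE]
  exact iInf_congr fun U ↦ iInf_congr fun hU ↦ by rw [hopen U hU]
end

section
/- Let X and Y be regular locally compact topological spaces, let μ and λ be Radon measures (in the generalized sense) on X and Y respectively, and let f : X × Y → ℝ be continuous with compact support. Then the iterated integrals agree: ∫_X ∫_Y f(x,y) dλ(y) dμ(x) = ∫_Y ∫_X f(x,y) dμ(x) dλ(y). -/
open MeasureTheory Set

/-- In a regular space the closure of a compact set is compact, so finiteness on closed compact
sets gives finiteness on every compact set. -/
theorem IsRadonG.isFiniteMeasureOnCompacts {X : Type*} [TopologicalSpace X] [RegularSpace X]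
    [MeasurableSpace X] {μ : Measure X} (hμ : IsRadonG μ) : IsFiniteMeasureOnCompacts μ :=
  ⟨fun K hK => (measure_mono subset_closure).trans_lt (hμ.1 (closure K) isClosed_closure hK.closure)⟩

/-- Fubini-type theorem for generalized Radon measures on regular locally compact spaces:
the iterated integrals of a continuous compactly supported function agree. -/
theorem iterated_integral_comm {X Y : Type*}
    [TopologicalSpace X] [RegularSpace X] [WeaklyLocallyCompactSpace X]
    [MeasurableSpace X] [BorelSpace X]
    [TopologicalSpace Y] [RegularSpace Y] [WeaklyLocallyCompactSpace Y]
    [MeasurableSpace Y] [BorelSpace Y]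
    (μ : Measure X) (hμ : IsRadonG μ) (lam : Measure Y) (hlam : IsRadonG lam)
    (f : X × Y → ℝ) (hf : Continuous f) (hfc : HasCompactSupport f) :
    ∫ x, ∫ y, f (x, y) ∂lam ∂μ = ∫ y, ∫ x, f (x, y) ∂μ ∂lam := by
  have := hμ.isFiniteMeasureOnCompacts
  have := hlam.isFiniteMeasureOnCompacts
  -- `f` vanishes off a product of two compact sets, hence of finite measure, which is where
  -- Mathlib's Fubini theorem reduces to the finite case; no Hausdorff assumption is needed.
  exact integral_integral_swap_of_hasCompactSupport (f := fun x y => f (x, y)) hf hfc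
end
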